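/- Fix a chore-division instance with n ≥ 2 agents and additive cost functions. Suppose the agents pairwise disagree on their n−1 most costly chores: for each agent i there exists a set T_i ⊆ M with |T_i| = n−1 such that c_i({e}) ≥ c_i({f}) for every e ∈ T_i and f ∈ M \ T_i, and the sets T_1,…,T_n are pairwise disjoint. Then a max(2, n−2)-EFX allocation exists. -/

import Mathlib

/-- `X` is an allocation: pairwise disjoint bundles covering all chores. -/
def IsAllocation {M : Type*} {n : ℕ} (X : Fin n → Finset M) : Prop :=
  (∀ i j : Fin n, i ≠ j → Disjoint (X i) (X j)) ∧ (∀ e : M, ∃ i : Fin n, e ∈ X i)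

/-!
Hand each agent's `n - 1` top chores out to the `n - 1` other agents, one each. Every bundle other
than agent `i`'s own then contains a chore from `T i`, so `i` finds it at least as costly as any
single chore outside `T i`; this domination is what survives the rest of the procedure. A bundle has
at most `n - 1` chores, none of them a top chore of its owner, so removing one chore leaves at most
`n - 2` chores, each dominated by every other bundle.

The remaining chores are allocated one at a time. In the digraph where each agent points to the
owner of a bundle it likes best, trading bundles along a cycle makes an agent envy-free. That agent
can take the next chore: for it, both the chore and its old bundle cost at most as much as any other
bundle, which is where the factor `2` comes from.
-/

section TopTrading

open Function

theorem periodicPts_nonempty_of_finite {ι : Type*} [Finite ι] [Nonempty ι] (f : ι → ι) :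
    (periodicPts f).Nonempty := by
  obtain ⟨i⟩ := ‹Nonempty ι›
  obtain ⟨a, b, hab, heq⟩ := Set.finite_univ.exists_lt_map_eq_of_forall_mem
    (f := fun k : ℕ => f^[k] i) fun _ => Set.mem_univ _
  refine ⟨f^[a] i, mk_mem_periodicPts (Nat.sub_pos_of_lt hab) ?_⟩
  rw [IsPeriodicPt, IsFixedPt, ← iterate_add_apply, Nat.sub_add_cancel hab.le]
  exact heq.symm

theorem exists_perm_forall_eq_self_or_eq_apply {ι : Type*} [Finite ι] [Nonempty ι] (f : ι → ι) :
    ∃ σ : Equiv.Perm ι, (∀ i, σ i = i ∨ σ i = f i) ∧ ∃ i, σ i = f i := by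
  classical
  let σ : Equiv.Perm ι :=
    Equiv.Perm.ofSubtype (p := (· ∈ periodicPts f)) ((bijOn_periodicPts f).equiv f)
  have eq_apply {i : ι} (hi : i ∈ periodicPts f) : σ i = f i :=
    Equiv.Perm.ofSubtype_apply_of_mem _ hi
  refine ⟨σ, fun i => ?_, (periodicPts_nonempty_of_finite f).imp fun _ => eq_apply⟩
  by_cases hi : i ∈ periodicPts f
  · exact .inr (eq_apply hi)
  · exact .inl (Equiv.Perm.ofSubtype_apply_of_not_mem _ hi)

end TopTrading

section Cost

variable {M K : Type*} [DecidableEq M] [AddCommMonoid K] [Preorder K]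

/-- Normalized, monotone and subadditive cost functions on bundles of chores. The
additive ones are among them. -/
structure IsSubadditiveCost (c : Finset M → K) : Prop where
  empty : c ∅ = 0
  mono : Monotone c
  union_le : ∀ S T, c (S ∪ T) ≤ c S + c T

namespace IsSubadditiveCost

theorem nonneg {c : Finset M → K} (hc : IsSubadditiveCost c) (S : Finset M) : 0 ≤ c S :=
  hc.empty.symm.trans_le (hc.mono S.empty_subset)

theorem insert_le {c : Finset M → K} (hc : IsSubadditiveCost c) (a : M) (S : Finset M) :
    c (insert a S) ≤ c {a} + c S := by
  rw [Finset.insert_eq]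
  exact hc.union_le {a} S

variable [IsOrderedAddMonoid K]

theorem le_card_nsmul {c : Finset M → K} (hc : IsSubadditiveCost c) {S : Finset M} {b : K}
    (hb : ∀ e ∈ S, c {e} ≤ b) : c S ≤ S.card • b := by
  induction S using Finset.induction_on with
  | empty => simp [hc.empty]
  | insert a S ha ih =>
    rw [Finset.forall_mem_insert] at hb
    calc c (insert a S) ≤ c {a} + c S := hc.insert_le a S
      _ ≤ b + S.card • b := add_le_add hb.1 (ih hb.2)
      _ = (insert a S).card • b := by rw [Finset.card_insert_of_notMem ha, succ_nsmul']

theorem sum {w : M → K} (hw : ∀ e, 0 ≤ w e) :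
    IsSubadditiveCost fun S : Finset M => ∑ e ∈ S, w e where
  empty := Finset.sum_empty
  mono _ _ hST := Finset.sum_le_sum_of_subset_of_nonneg hST fun e _ _ => hw e
  union_le S T := by
    rw [← Finset.sum_union_inter]
    exact le_add_of_nonneg_right (Finset.sum_nonneg fun e _ => hw e)

end IsSubadditiveCost

end Cost

section Allocation

open scoped Function

variable {ι M : Type*}

/-- `X` is an allocation of the set `R` of chores: the partial allocations met along the way. -/
structure IsAllocationOf (R : Finset M) (X : ι → Finset M) : Prop where
  disjoint : Pairwise (Disjoint on X)
  mem_iff : ∀ e, e ∈ R ↔ ∃ i, e ∈ X i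

theorem IsAllocationOf.comp_perm {R : Finset M} {X : ι → Finset M} (hX : IsAllocationOf R X)
    (σ : Equiv.Perm ι) : IsAllocationOf R (X ∘ σ) where
  disjoint := hX.disjoint.comp_of_injective σ.injective
  mem_iff e := (hX.mem_iff e).trans σ.surjective.exists

variable [DecidableEq M]

section HandOut

variable [Fintype ι] [DecidableEq ι] {T : ι → Finset M}

/-- The allocation in which every agent `i` hands the chores of `T i` out to the other agents, one
each, according to the bijection `g i`. -/
def handOut (g : ∀ i, {j // j ≠ i} ≃ T i) (j : ι) : Finset M :=
  Finset.univ.image fun i : {i // i ≠ j} => (g i ⟨j, i.2.symm⟩ : M)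

variable (g : ∀ i, {j // j ≠ i} ≃ T i)

theorem mem_handOut {j : ι} {e : M} : e ∈ handOut g j ↔ ∃ i, ∃ h : j ≠ i, (g i ⟨j, h⟩ : M) = e := by
  simp [handOut, eq_comm]

theorem card_handOut_le (j : ι) : (handOut g j).card ≤ Fintype.card ι - 1 :=
  Finset.card_image_le.trans (by simp)

theorem exists_mem_handOut {i j : ι} (hji : j ≠ i) : ∃ e ∈ T i, e ∈ handOut g j :=
  ⟨g i ⟨j, hji⟩, (g i _).2, (mem_handOut g).2 ⟨i, hji, rfl⟩⟩

theorem disjoint_handOut (hdisj : Pairwise (Disjoint on T)) (i : ι) :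
    Disjoint (handOut g i) (T i) := by
  refine Finset.disjoint_left.2 fun e he => ?_
  obtain ⟨k, hik, rfl⟩ := (mem_handOut g).1 he
  exact Finset.disjoint_left.1 (hdisj hik.symm) (g k _).2

theorem isAllocationOf_handOut (hdisj : Pairwise (Disjoint on T)) :
    IsAllocationOf (Finset.univ.biUnion T) (handOut g) where
  disjoint i j hij := by
    refine Finset.disjoint_left.2 fun e hi hj => ?_
    obtain ⟨a, ha, rfl⟩ := (mem_handOut g).1 hi
    obtain ⟨b, hb, hab⟩ := (mem_handOut g).1 hj
    obtain rfl : a = b :=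
      hdisj.eq (Finset.not_disjoint_iff.2 ⟨_, (g a ⟨i, ha⟩).2, hab ▸ (g b ⟨j, hb⟩).2⟩)
    exact hij (congrArg Subtype.val ((g a).injective (Subtype.ext hab.symm)))
  mem_iff e := by
    simp only [Finset.mem_biUnion, Finset.mem_univ, true_and, mem_handOut]
    constructor
    · rintro ⟨k, hk⟩
      obtain ⟨⟨j, hj⟩, hje⟩ := (g k).surjective ⟨e, hk⟩
      exact ⟨j, k, hj, congrArg Subtype.val hje⟩
    · rintro ⟨j, k, hj, rfl⟩
      exact ⟨k, (g k _).2⟩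

end HandOut

variable [DecidableEq ι]

/-- The allocation obtained from `X` by adding the chore `a` to the bundle of agent `s`. -/
def giveChore (X : ι → Finset M) (s : ι) (a : M) : ι → Finset M :=
  Function.update X s (insert a (X s))

@[simp]
theorem giveChore_self (X : ι → Finset M) (s : ι) (a : M) :
    giveChore X s a s = insert a (X s) :=
  Function.update_self ..

theorem giveChore_of_ne (X : ι → Finset M) {s i : ι} (h : i ≠ s) (a : M) :
    giveChore X s a i = X i :=
  Function.update_of_ne h ..

theorem mem_giveChore {X : ι → Finset M} {s i : ι} {a e : M} :
    e ∈ giveChore X s a i ↔ (i = s ∧ e = a) ∨ e ∈ X i := by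
  by_cases h : i = s
  · subst h
    simp
  · simp [giveChore_of_ne X h, h]

theorem subset_giveChore (X : ι → Finset M) (s : ι) (a : M) (i : ι) : X i ⊆ giveChore X s a i :=
  fun _ he => mem_giveChore.2 (.inr he)

theorem IsAllocationOf.giveChore {R : Finset M} {X : ι → Finset M} (hX : IsAllocationOf R X)
    {a : M} (ha : a ∉ R) (s : ι) : IsAllocationOf (insert a R) (giveChore X s a) where
  disjoint i j hij := by
    have ha' (k : ι) : a ∉ X k := fun hk => ha ((hX.mem_iff a).2 ⟨k, hk⟩)
    refine Finset.disjoint_left.2 fun e hi hj => ?_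
    rcases mem_giveChore.1 hi, mem_giveChore.1 hj with ⟨⟨his, hea⟩ | hi, ⟨hjs, hea'⟩ | hj⟩
    · exact hij (his.trans hjs.symm)
    · exact ha' j (hea ▸ hj)
    · exact ha' i (hea' ▸ hi)
    · exact Finset.disjoint_left.1 (hX.disjoint hij) hi hj
  mem_iff e := by simp [mem_giveChore, exists_or, hX.mem_iff]

end Allocation

section Envy

variable {ι M K : Type*}

/-- Agent `i` does not envy anyone in the allocation `X`. -/
def IsEnvyFree [LE K] (c : ι → Finset M → K) (X : ι → Finset M) (i : ι) : Prop :=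
  ∀ j, c i (X i) ≤ c i (X j)

theorem exists_perm_isEnvyFree [Finite ι] [Nonempty ι] [LinearOrder K]
    (c : ι → Finset M → K) (X : ι → Finset M) :
    ∃ σ : Equiv.Perm ι, (∀ i, σ i = i ∨ IsEnvyFree c (X ∘ σ) i) ∧
      ∃ s, IsEnvyFree c (X ∘ σ) s := by
  choose f hf using fun i => Finite.exists_min fun j => c i (X j)
  obtain ⟨σ, hσ, s, hs⟩ := exists_perm_forall_eq_self_or_eq_apply f
  have envyFree {i : ι} (hi : σ i = f i) : IsEnvyFree c (X ∘ σ) i := fun j => by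
    simpa only [Function.comp_apply, hi] using hf i (σ j)
  exact ⟨σ, fun i => (hσ i).imp_right envyFree, s, envyFree hs⟩

/-- Every agent `i` finds each bundle but its own at least as costly as any single chore outside
`T i`. This is the invariant that keeps later assignments of single chores cheap. -/
def DominatesOutside [LE K] (T : ι → Finset M) (c : ι → Finset M → K)
    (X : ι → Finset M) : Prop :=
  ∀ ⦃i j⦄, j ≠ i → ∀ e ∉ T i, c i {e} ≤ c i (X j)

theorem DominatesOutside.comp_perm [Preorder K] {T X : ι → Finset M}
    {c : ι → Finset M → K} (hX : DominatesOutside T c X) {σ : Equiv.Perm ι}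
    (hσ : ∀ i, σ i = i ∨ IsEnvyFree c (X ∘ σ) i) : DominatesOutside T c (X ∘ σ) := by
  intro i j hji e he
  by_cases hj : σ j = i
  · -- `j` now holds the old bundle of `i`, so `i` itself has traded.
    have hi : σ i ≠ i := fun hi => hji (σ.injective (hj.trans hi.symm))
    exact (hX hi e he).trans ((hσ i).resolve_left hi j)
  · exact hX hj e he

end Envy

section Fairness

open scoped Function

variable {ι M K : Type*} [DecidableEq M] [AddCommMonoid K] [Preorder K]

/-- `X` is `α`-EFX: no agent envies after the removal of any one chore from its own bundle, up to
the factor `α`. An integer factor lets the costs live in any ordered monoid. -/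
def IsEFX (α : ℕ) (c : ι → Finset M → K) (X : ι → Finset M) : Prop :=
  ∀ i j, ∀ e ∈ X i, c i (X i \ {e}) ≤ α • c i (X j)

/-- The loop invariant of the procedure, after the chores in `R` have been allocated. -/
structure IsDominatingEFX (α : ℕ) (c : ι → Finset M → K) (T : ι → Finset M) (R : Finset M)
    (X : ι → Finset M) : Prop where
  isAllocationOf : IsAllocationOf R X
  dominatesOutside : DominatesOutside T c X
  isEFX : IsEFX α c X

variable {c : ι → Finset M → K} {T X : ι → Finset M} {α : ℕ}

theorem DominatesOutside.giveChore [DecidableEq ι] (hX : DominatesOutside T c X)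
    (hc : ∀ i, IsSubadditiveCost (c i)) (s : ι) (a : M) :
    DominatesOutside T c (giveChore X s a) :=
  fun i j hji e he => (hX hji e he).trans ((hc i).mono (subset_giveChore X s a j))

variable [IsOrderedAddMonoid K]

theorem IsSubadditiveCost.sdiff_le_nsmul {c : Finset M → K} (hc : IsSubadditiveCost c)
    {α : ℕ} (hα : α ≠ 0) (S : Finset M) (e : M) : c (S \ {e}) ≤ α • c S :=
  (hc.mono Finset.sdiff_subset).trans (le_self_nsmul (hc.nonneg S) hα)

theorem DominatesOutside.isEFX (hX : DominatesOutside T c X)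
    (hc : ∀ i, IsSubadditiveCost (c i)) (hdisj : ∀ i, Disjoint (X i) (T i)) (hα : α ≠ 0)
    (hcard : ∀ i, (X i).card ≤ α + 1) : IsEFX α c X := by
  intro i j e he
  obtain rfl | hji := eq_or_ne j i
  · exact (hc j).sdiff_le_nsmul hα (X j) e
  have card_le : (X i \ {e}).card ≤ α := by
    rw [Finset.card_sdiff_of_subset (Finset.singleton_subset_iff.2 he), Finset.card_singleton]
    exact Nat.sub_le_of_le_add (hcard i)
  have dominated : ∀ f ∈ X i \ {e}, c i {f} ≤ c i (X j) := fun f hf =>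
    hX hji f (Finset.disjoint_left.1 (hdisj i) (Finset.sdiff_subset hf))
  exact ((hc i).le_card_nsmul dominated).trans (nsmul_le_nsmul_left ((hc i).nonneg _) card_le)

theorem exists_isDominatingEFX_biUnion [Fintype ι]
    (hc : ∀ i, IsSubadditiveCost (c i)) (hT : ∀ i, (T i).card = Fintype.card ι - 1)
    (htop : ∀ i, ∀ e ∈ T i, ∀ f ∉ T i, c i {f} ≤ c i {e}) (hdisj : Pairwise (Disjoint on T)) :
    ∃ X, IsDominatingEFX (max 2 (Fintype.card ι - 2)) c T (Finset.univ.biUnion T) X := by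
  classical
  let g (i : ι) : {j // j ≠ i} ≃ T i := Fintype.equivOfCardEq (by simp [hT])
  have hdom : DominatesOutside T c (handOut g) := by
    intro i j hji f hf
    obtain ⟨e, heT, heX⟩ := exists_mem_handOut g hji
    exact (htop i e heT f hf).trans ((hc i).mono (Finset.singleton_subset_iff.2 heX))
  exact ⟨handOut g, isAllocationOf_handOut g hdisj, hdom,
    hdom.isEFX hc (disjoint_handOut g hdisj) (by lia) fun i => (card_handOut_le g i).trans (by lia)⟩

theorem IsEFX.comp_perm (hX : IsEFX α c X) (hc : ∀ i, IsSubadditiveCost (c i)) (hα : α ≠ 0)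
    {σ : Equiv.Perm ι} (hσ : ∀ i, σ i = i ∨ IsEnvyFree c (X ∘ σ) i) : IsEFX α c (X ∘ σ) := by
  intro i j e he
  rcases hσ i with hi | hi
  · rw [Function.comp_apply, hi] at he ⊢
    exact hX i (σ j) e he
  · exact ((hc i).sdiff_le_nsmul hα _ e).trans (nsmul_le_nsmul_right (hi j) α)

theorem IsEFX.giveChore [DecidableEq ι] (hX : IsEFX α c X) (hc : ∀ i, IsSubadditiveCost (c i))
    (hα : 2 ≤ α) {s : ι} (hs : IsEnvyFree c X s) {a : M}
    (ha : ∀ j, j ≠ s → c s {a} ≤ c s (X j)) : IsEFX α c (giveChore X s a) := by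
  intro i j e he
  obtain rfl | hji := eq_or_ne j i
  · exact (hc j).sdiff_le_nsmul (Nat.ne_zero_of_lt hα) _ e
  obtain rfl | his := eq_or_ne i s
  · rw [giveChore_self, giveChore_of_ne X hji]
    calc c i (insert a (X i) \ {e}) ≤ c i (insert a (X i)) := (hc i).mono Finset.sdiff_subset
      _ ≤ c i {a} + c i (X i) := (hc i).insert_le a (X i)
      _ ≤ c i (X j) + c i (X j) := add_le_add (ha j hji) (hs j)
      _ = 2 • c i (X j) := (two_nsmul _).symm
      _ ≤ α • c i (X j) := nsmul_le_nsmul_left ((hc i).nonneg _) hα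
  · rw [giveChore_of_ne X his] at he ⊢
    exact (hX i j e he).trans (nsmul_le_nsmul_right ((hc i).mono (subset_giveChore X s a j)) α)

end Fairness

section TopDisagreement

open scoped Function

variable {ι M K : Type*} [DecidableEq M] [AddCommMonoid K] [LinearOrder K]
  [IsOrderedAddMonoid K] {c : ι → Finset M → K} {T X : ι → Finset M} {R : Finset M}

theorem IsDominatingEFX.exists_insert [Finite ι] [Nonempty ι] {α : ℕ}
    (hX : IsDominatingEFX α c T R X) (hc : ∀ i, IsSubadditiveCost (c i)) (hα : 2 ≤ α)
    (hTR : ∀ i, T i ⊆ R) {a : M} (ha : a ∉ R) :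
    ∃ Y, IsDominatingEFX α c T (insert a R) Y := by
  classical
  obtain ⟨σ, hσ, s, hs⟩ := exists_perm_isEnvyFree c X
  have hdom := hX.dominatesOutside.comp_perm hσ
  have hefx := hX.isEFX.comp_perm hc (Nat.ne_zero_of_lt hα) hσ
  exact ⟨giveChore (X ∘ σ) s a, (hX.isAllocationOf.comp_perm σ).giveChore ha s,
    hdom.giveChore hc s a,
    hefx.giveChore hc hα hs fun j hj => hdom hj a fun haT => ha (hTR s haT)⟩

variable [Fintype ι]

theorem exists_isDominatingEFX_biUnion_union [Nonempty ι] (hc : ∀ i, IsSubadditiveCost (c i))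
    (hT : ∀ i, (T i).card = Fintype.card ι - 1)
    (htop : ∀ i, ∀ e ∈ T i, ∀ f ∉ T i, c i {f} ≤ c i {e}) (hdisj : Pairwise (Disjoint on T))
    (U : Finset M) :
    ∃ X, IsDominatingEFX (max 2 (Fintype.card ι - 2)) c T (Finset.univ.biUnion T ∪ U) X := by
  induction U using Finset.induction_on with
  | empty => simpa only [Finset.union_empty] using exists_isDominatingEFX_biUnion hc hT htop hdisj
  | insert a U _ ih =>
    rw [Finset.union_insert]
    by_cases ha : a ∈ Finset.univ.biUnion T ∪ U
    · rwa [Finset.insert_eq_of_mem ha]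
    · obtain ⟨X, hX⟩ := ih
      have hTR (i : ι) : T i ⊆ Finset.univ.biUnion T ∪ U :=
        (Finset.subset_biUnion_of_mem T (Finset.mem_univ i)).trans Finset.subset_union_left
      exact hX.exists_insert hc (le_max_left _ _) hTR ha

theorem max_two_n_sub_two_efx_top_disagreement_general [Nonempty ι] [Fintype M]
    (hc : ∀ i, IsSubadditiveCost (c i)) (hT : ∀ i, (T i).card = Fintype.card ι - 1)
    (htop : ∀ i, ∀ e ∈ T i, ∀ f ∉ T i, c i {f} ≤ c i {e}) (hdisj : Pairwise (Disjoint on T)) :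
    ∃ X, IsAllocationOf Finset.univ X ∧ IsEFX (max 2 (Fintype.card ι - 2)) c X := by
  obtain ⟨X, hX⟩ := exists_isDominatingEFX_biUnion_union hc hT htop hdisj Finset.univ
  rw [Finset.union_eq_right.2 (Finset.subset_univ _)] at hX
  exact ⟨X, hX.isAllocationOf, hX.isEFX⟩

end TopDisagreement

/-- Top-`(n-1)` disagreement: if the agents (with additive costs given by item costs `w`)
pairwise disagree on their `n-1` most costly chores, a `max(2, n-2)`-EFX allocation
exists. -/
theorem max_two_n_sub_two_efx_top_disagreement
    (n : ℕ) (hn : 2 ≤ n) (M : Type*) [Fintype M] [DecidableEq M]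
    (w : Fin n → M → ℝ) (hw : ∀ i e, 0 ≤ w i e)
    (T : Fin n → Finset M) (hT : ∀ i, (T i).card = n - 1)
    (htop : ∀ i : Fin n, ∀ e ∈ T i, ∀ f : M, f ∉ T i → w i f ≤ w i e)
    (hdisj : ∀ i j : Fin n, i ≠ j → Disjoint (T i) (T j)) :
    ∃ X : Fin n → Finset M, IsAllocation X ∧
      ∀ i j : Fin n, ∀ e ∈ X i,
        ∑ f ∈ X i \ {e}, w i f ≤ max 2 ((n : ℝ) - 2) * ∑ f ∈ X j, w i f := by
  have : Nonempty (Fin n) := ⟨⟨0, by lia⟩⟩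
  obtain ⟨X, hX, hefx⟩ := max_two_n_sub_two_efx_top_disagreement_general (K := ℝ) (T := T)
    (fun i => .sum (hw i)) (by simpa using hT) (by simpa using htop) hdisj
  refine ⟨X, ⟨hX.disjoint, fun e => (hX.mem_iff e).1 (Finset.mem_univ e)⟩, fun i j e he => ?_⟩
  simpa [Nat.cast_sub hn] using hefx i j e he
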